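/- Let p and q be restriction-free FNM processes. If p ~sp q, then p | r ~sp q | r for every restriction-free FNM process r. (Structure-preserving bisimilarity is a congruence for parallel composition.) -/

import Mathlib

/-- Actions of FNM: the invisible action τ, input actions `a ∈ L` and
output actions `ā ∈ L̄` (here `α` plays the role of the finite set `L`). -/
inductive Act (α : Type) where
  | tau : Act α
  | inp : α → Act α
  | out : α → Act α
  deriving DecidableEq

/-- (Open) FNM terms: `0`, the variable `x`, action prefixing `mu.t`, strong
prefixing `a̲.s`, choice `s+s`, constants `C`, parallel `t|t` and
restriction `(νa)p`.  The syntactic categories are carved out below. -/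
inductive FNM (α κ : Type) where
  | nil : FNM α κ
  | var : FNM α κ
  | pref : Act α → FNM α κ → FNM α κ
  | spref : α → FNM α κ → FNM α κ
  | sum : FNM α κ → FNM α κ → FNM α κ
  | const : κ → FNM α κ
  | par : FNM α κ → FNM α κ → FNM α κ
  | res : α → FNM α κ → FNM α κ
  deriving DecidableEq

namespace FNM

variable {α κ : Type}

mutual
  /-- Guarded terms: syntactic category `s ::= 0 | mu.t | a̲.s | s+s`
  (with `t` restriction-free). -/
  def Grd : FNM α κ → Prop
    | .nil => True
    | .var => False
    | .pref _ t => RF t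
    | .spref _ s => Grd s
    | .sum s1 s2 => Grd s1 ∧ Grd s2
    | .const _ => False
    | .par _ _ => False
    | .res _ _ => False
  /-- Restriction-free terms: syntactic category `t ::= q | t|t`, where
  `q ::= s | C | x` is the category of sequential terms. -/
  def RF : FNM α κ → Prop
    | .nil => True
    | .var => True
    | .pref _ t => RF t
    | .spref _ s => Grd s
    | .sum s1 s2 => Grd s1 ∧ Grd s2
    | .const _ => True
    | .par t1 t2 => RF t1 ∧ RF t2
    | .res _ _ => False
end

/-- Sequential terms: `q ::= s | C | x`. -/
def Seq (t : FNM α κ) : Prop :=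
  Grd t ∨ (∃ c, t = FNM.const c) ∨ t = FNM.var

/-- General terms: `p ::= t | (νa)p`. -/
def Gen : FNM α κ → Prop
  | .res _ p => Gen p
  | t => RF t

/-- Closed terms: no occurrence of the variable. -/
def VarFree : FNM α κ → Prop
  | .nil => True
  | .var => False
  | .pref _ t => VarFree t
  | .spref _ s => VarFree s
  | .sum s1 s2 => VarFree s1 ∧ VarFree s2
  | .const _ => True
  | .par t1 t2 => VarFree t1 ∧ VarFree t2
  | .res _ p => VarFree p

/-- Substitution `p{r/x}` of the term `r` for every occurrence of the
variable `x` in `p` (constants are dealt with via the environment). -/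
def subst (r : FNM α κ) : FNM α κ → FNM α κ
  | .nil => .nil
  | .var => r
  | .pref mu t => .pref mu (subst r t)
  | .spref a s => .spref a (subst r s)
  | .sum s1 s2 => .sum (subst r s1) (subst r s2)
  | .const c => .const c
  | .par t1 t2 => .par (subst r t1) (subst r t2)
  | .res a p => .res a (subst r p)

/-- `mu` uses the name `a`. -/
def _root_.Act.uses (a : α) : Act α → Prop
  | .tau => False
  | .inp b => b = a
  | .out b => b = a

/-- `a` occurs free in a term (through an environment `env` giving the body
of each process constant). -/
inductive FreeIn (env : κ → FNM α κ) (a : α) : FNM α κ → Prop where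
  | pref_act {mu : Act α} {t : FNM α κ} : mu.uses a → FreeIn env a (.pref mu t)
  | pref_cont {mu : Act α} {t : FNM α κ} : FreeIn env a t → FreeIn env a (.pref mu t)
  | spref_act {s : FNM α κ} : FreeIn env a (.spref a s)
  | spref_cont {b : α} {s : FNM α κ} : FreeIn env a s → FreeIn env a (.spref b s)
  | sum_l {s1 s2 : FNM α κ} : FreeIn env a s1 → FreeIn env a (.sum s1 s2)
  | sum_r {s1 s2 : FNM α κ} : FreeIn env a s2 → FreeIn env a (.sum s1 s2)
  | par_l {t1 t2 : FNM α κ} : FreeIn env a t1 → FreeIn env a (.par t1 t2)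
  | par_r {t1 t2 : FNM α κ} : FreeIn env a t2 → FreeIn env a (.par t1 t2)
  | res {b : α} {p : FNM α κ} : a ≠ b → FreeIn env a p → FreeIn env a (.res b p)
  | const {c : κ} : FreeIn env a (env c) → FreeIn env a (.const c)

/-- `a` occurs bound (by a restriction) in a term. -/
inductive BoundIn (env : κ → FNM α κ) (a : α) : FNM α κ → Prop where
  | res_here {p : FNM α κ} : BoundIn env a (.res a p)
  | res_in {b : α} {p : FNM α κ} : BoundIn env a p → BoundIn env a (.res b p)
  | pref {mu : Act α} {t : FNM α κ} : BoundIn env a t → BoundIn env a (.pref mu t)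
  | spref {b : α} {s : FNM α κ} : BoundIn env a s → BoundIn env a (.spref b s)
  | sum_l {s1 s2 : FNM α κ} : BoundIn env a s1 → BoundIn env a (.sum s1 s2)
  | sum_r {s1 s2 : FNM α κ} : BoundIn env a s2 → BoundIn env a (.sum s1 s2)
  | par_l {t1 t2 : FNM α κ} : BoundIn env a t1 → BoundIn env a (.par t1 t2)
  | par_r {t1 t2 : FNM α κ} : BoundIn env a t2 → BoundIn env a (.par t1 t2)
  | const {c : κ} : BoundIn env a (env c) → BoundIn env a (.const c)

end FNM

/-- A place of the net `N_FNM`: a sequential (extended) term, rendered as a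
pure sequential term together with the record `ρ : α → Bool` of which names
have been replaced by their restricted counterparts (`ρ a = true` represents
the substitution `{a'/a}`). -/
abbrev Place (α κ : Type) := FNM α κ × (α → Bool)

namespace FNM

variable {α κ : Type} [DecidableEq α] [DecidableEq κ] [Fintype α]

/-- The decomposition function `dec`, mapping (extended) terms to markings:
`dec(0) = θ`, `dec(p|q) = dec(p) ⊕ dec(q)`, `dec((νa)p) = dec(p){a'/a}`, and
a sequential term other than `0` is mapped to a single place. -/
def dec (ρ : α → Bool) : FNM α κ → Multiset (Place α κ)
  | .nil => 0
  | .par t1 t2 => dec ρ t1 + dec ρ t2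
  | .res a p => dec (Function.update ρ a true) p
  | t => {(t, ρ)}

end FNM

/-- Extended visible actions: inputs and outputs, possibly restricted
(`inp a true` represents `a'`, `out a false` represents `ā`, etc.). -/
inductive XAct (α : Type) where
  | inp : α → Bool → XAct α
  | out : α → Bool → XAct α

/-- Labels of net transitions: `τ` is the empty sequence, and otherwise a
sequence of extended actions. -/
abbrev Lbl (α : Type) := List (XAct α)

/-- An extended action carries no restricted name. -/
def XAct.unres {α : Type} : XAct α → Prop
  | .inp _ r => r = false
  | .out _ r => r = false

/-- The label contributed by prefix `mu` under the restriction record `ρ`. -/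
def actL {α : Type} (ρ : α → Bool) : Act α → Lbl α
  | .tau => []
  | .inp a => [XAct.inp a (ρ a)]
  | .out a => [XAct.out a (ρ a)]

/-- The synchronization relation `Sync(σ1, σ2, σ)`: `Sync(α, ᾱ, τ)`,
`Sync(aσ, ā, σ)` and `Sync(ā, aσ, σ)` for `σ ≠ ε` (also on restricted
actions). -/
inductive Sync {α : Type} : Lbl α → Lbl α → Lbl α → Prop where
  | inout (a : α) (r : Bool) : Sync [XAct.inp a r] [XAct.out a r] []
  | outin (a : α) (r : Bool) : Sync [XAct.out a r] [XAct.inp a r] []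
  | seqL (a : α) (r : Bool) (σ : Lbl α) :
      σ ≠ [] → Sync (XAct.inp a r :: σ) [XAct.out a r] σ
  | seqR (a : α) (r : Bool) (σ : Lbl α) :
      σ ≠ [] → Sync [XAct.out a r] (XAct.inp a r :: σ) σ

namespace FNM

variable {α κ : Type} [DecidableEq α] [DecidableEq κ] [Fintype α]

/-- A marking is admissible if for no name `a` both `a` and its restricted
counterpart `a'` occur free in it. -/
def Adm (env : κ → FNM α κ) (m : Multiset (Place α κ)) : Prop :=
  ∀ a : α, ¬ ((∃ p ∈ m, FreeIn env a p.1 ∧ p.2 a = false) ∧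
              (∃ p ∈ m, FreeIn env a p.1 ∧ p.2 a = true))

/-- The net transitions of `N_FNM`, generated by the rules (pref), (sum₁),
(sum₂), (cons), (s-pref) and (s-com). -/
inductive Tr (env : κ → FNM α κ) :
    Multiset (Place α κ) → Lbl α → Multiset (Place α κ) → Prop where
  | pref (ρ : α → Bool) (mu : Act α) (t : FNM α κ) :
      Tr env {(FNM.pref mu t, ρ)} (actL ρ mu) (dec ρ t)
  | sum1 (ρ : α → Bool) (s1 s2 : FNM α κ) (σ : Lbl α) (m : Multiset (Place α κ)) :
      Tr env (dec ρ s1) σ m → Tr env {(FNM.sum s1 s2, ρ)} σ m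
  | sum2 (ρ : α → Bool) (s1 s2 : FNM α κ) (σ : Lbl α) (m : Multiset (Place α κ)) :
      Tr env (dec ρ s2) σ m → Tr env {(FNM.sum s1 s2, ρ)} σ m
  | cons (ρ : α → Bool) (c : κ) (σ : Lbl α) (m : Multiset (Place α κ)) :
      Tr env (dec ρ (env c)) σ m → Tr env {(FNM.const c, ρ)} σ m
  | spref (ρ : α → Bool) (a : α) (s : FNM α κ) (σ : Lbl α) (m : Multiset (Place α κ)) :
      Tr env (dec ρ s) σ m →
      Tr env {(FNM.spref a s, ρ)} (XAct.inp a (ρ a) :: σ) m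
  | scom (m1 m2 m1' m2' : Multiset (Place α κ)) (σ1 σ2 σ : Lbl α) :
      Tr env m1 σ1 m1' → Tr env m2 σ2 m2' →
      Adm env (m1 + m2) → Sync σ1 σ2 σ →
      Tr env (m1 + m2) σ (m1' + m2')

/-- Tritions of the net `N_FNM`: only those whose label contains no
restricted action are kept. -/
def NetTr (env : κ → FNM α κ) (m : Multiset (Place α κ)) (σ : Lbl α)
    (m' : Multiset (Place α κ)) : Prop :=
  Tr env m σ m' ∧ ∀ x ∈ σ, x.unres

/-- First projection of a linking. -/
def pi1 (l : Multiset (Place α κ × Place α κ)) : Multiset (Place α κ) :=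
  l.map Prod.fst

/-- Second projection of a linking. -/
def pi2 (l : Multiset (Place α κ × Place α κ)) : Multiset (Place α κ) :=
  l.map Prod.snd

/-- Structure-preserving bisimulation on the net `N_FNM`. -/
def IsSPB (env : κ → FNM α κ) (R : Set (Multiset (Place α κ × Place α κ))) : Prop :=
  ∀ l ∈ R, ∀ c ≤ l,
    (∀ σ m1, NetTr env (pi1 c) σ m1 →
      ∃ m2 cb, NetTr env (pi2 c) σ m2 ∧
        pi1 cb = m1 ∧ pi2 cb = m2 ∧ l - c + cb ∈ R) ∧
    (∀ σ m2, NetTr env (pi2 c) σ m2 →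
      ∃ m1 cb, NetTr env (pi1 c) σ m1 ∧
        pi1 cb = m1 ∧ pi2 cb = m2 ∧ l - c + cb ∈ R)

/-- `p ~sp q`: some structure-preserving bisimulation contains a linking
projecting on `dec(p)` and `dec(q)`. -/
def SPEq (env : κ → FNM α κ) (p q : FNM α κ) : Prop :=
  ∃ R, IsSPB env R ∧ ∃ l ∈ R,
    pi1 l = dec (fun _ => false) p ∧ pi2 l = dec (fun _ => false) q

end FNM

/-!
The parallel composition of two linkings is their sum, so the candidate bisimulation for
`p | r` and `q | s` consists of the sums of a linking for `p, q` and one for `r, s`. A transition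
may consume places on both sides of such a sum. However, the preset of a transition that is not a
synchronization is a single place, hence a single link, which belongs to one of the two summands.
Synchronizations are answered by composing the answers of their two components; the composite is
a transition because markings without restricted names are always admissible.
-/

namespace FNM

open scoped Pointwise

variable {α κ : Type}

/-- A linking: a finite multiset of pairs of places, the states of a structure-preserving
bisimulation. -/
abbrev Linking (α κ : Type) := Multiset (Place α κ × Place α κ)

theorem pi1_add (c d : Linking α κ) : pi1 (c + d) = pi1 c + pi1 d :=
  Multiset.map_add _ _ _

theorem pi2_add (c d : Linking α κ) : pi2 (c + d) = pi2 c + pi2 d :=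
  Multiset.map_add _ _ _

theorem pi1_map_swap (c : Linking α κ) : pi1 (c.map Prod.swap) = pi2 c := by
  simp [pi1, pi2]

theorem pi2_map_swap (c : Linking α κ) : pi2 (c.map Prod.swap) = pi1 c := by
  simp [pi1, pi2]

theorem exists_add_eq_of_pi1_eq_add {c : Linking α κ} {m₁ m₂ : Multiset (Place α κ)}
    (h : pi1 c = m₁ + m₂) : ∃ c₁ c₂, c = c₁ + c₂ ∧ pi1 c₁ = m₁ ∧ pi1 c₂ = m₂ := by
  have hrel : Multiset.Rel (fun z x => z.1 = x) c (m₁ + m₂) :=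
    Multiset.rel_map_left.1 (Multiset.rel_eq.2 h)
  obtain ⟨c₁, c₂, h₁, h₂, hc⟩ := Multiset.rel_add_right.1 hrel
  exact ⟨c₁, c₂, hc, Multiset.rel_eq.1 (Multiset.rel_map_left.2 h₁),
    Multiset.rel_eq.1 (Multiset.rel_map_left.2 h₂)⟩

/-- Markings of restriction-free processes: every place is a restriction-free term none of whose
names has been replaced by its restricted counterpart. -/
def Unrestricted (m : Multiset (Place α κ)) : Prop :=
  ∀ x ∈ m, RF x.1 ∧ x.2 = fun _ => false

theorem unrestricted_zero : Unrestricted (0 : Multiset (Place α κ)) := by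
  simp [Unrestricted]

theorem unrestricted_singleton {t : FNM α κ} {ρ : α → Bool} :
    Unrestricted {(t, ρ)} ↔ RF t ∧ ρ = fun _ => false := by
  simp [Unrestricted]

theorem unrestricted_add {m₁ m₂ : Multiset (Place α κ)} :
    Unrestricted (m₁ + m₂) ↔ Unrestricted m₁ ∧ Unrestricted m₂ := by
  simp only [Unrestricted, Multiset.mem_add, or_imp]
  exact forall_and

theorem Unrestricted.adm {m : Multiset (Place α κ)} (hm : Unrestricted m) (env : κ → FNM α κ) :
    Adm env m := by
  rintro a ⟨-, x, hx, -, hxa⟩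
  simp [(hm x hx).2] at hxa

theorem Grd.rf {t : FNM α κ} (ht : Grd t) : RF t := by
  cases t <;> simp_all [Grd, RF]

section Transitions

variable [DecidableEq α] {env : κ → FNM α κ}

theorem unrestricted_dec {t : FNM α κ} (ht : RF t) : Unrestricted (dec (fun _ => false) t) := by
  induction t with
  | nil => exact unrestricted_zero
  | par t₁ t₂ ih₁ ih₂ => exact unrestricted_add.2 ⟨ih₁ ht.1, ih₂ ht.2⟩
  | res => exact ht.elim
  | _ => exact unrestricted_singleton.2 ⟨ht, rfl⟩

theorem Tr.unrestricted_and_unres (henv : ∀ c, RF (env c)) {m m' : Multiset (Place α κ)}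
    {σ : Lbl α} (h : Tr env m σ m') (hm : Unrestricted m) :
    Unrestricted m' ∧ ∀ x ∈ σ, x.unres := by
  induction h with
  | pref ρ mu t =>
    obtain ⟨ht, rfl⟩ := unrestricted_singleton.1 hm
    refine ⟨unrestricted_dec ht, ?_⟩
    cases mu <;> simp [actL, XAct.unres]
  | sum1 ρ s₁ s₂ σ m _ ih =>
    obtain ⟨hs, rfl⟩ := unrestricted_singleton.1 hm
    exact ih (unrestricted_dec hs.1.rf)
  | sum2 ρ s₁ s₂ σ m _ ih =>
    obtain ⟨hs, rfl⟩ := unrestricted_singleton.1 hm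
    exact ih (unrestricted_dec hs.2.rf)
  | cons ρ c σ m _ ih =>
    obtain ⟨-, rfl⟩ := unrestricted_singleton.1 hm
    exact ih (unrestricted_dec (henv c))
  | spref ρ a s σ m _ ih =>
    obtain ⟨hs, rfl⟩ := unrestricted_singleton.1 hm
    obtain ⟨hm', hσ⟩ := ih (unrestricted_dec (Grd.rf hs))
    exact ⟨hm', List.forall_mem_cons.2 ⟨rfl, hσ⟩⟩
  | scom m₁ m₂ m₁' m₂' σ₁ σ₂ σ _ _ _ hsync ih₁ ih₂ =>
    obtain ⟨hm₁, hm₂⟩ := unrestricted_add.1 hm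
    obtain ⟨hm₁', hσ₁⟩ := ih₁ hm₁
    obtain ⟨hm₂', hσ₂⟩ := ih₂ hm₂
    refine ⟨unrestricted_add.2 ⟨hm₁', hm₂'⟩, ?_⟩
    cases hsync with
    | inout | outin => simp
    | seqL => exact (List.forall_mem_cons.1 hσ₁).2
    | seqR => exact (List.forall_mem_cons.1 hσ₂).2

theorem Tr.unrestricted (henv : ∀ c, RF (env c)) {m m' : Multiset (Place α κ)}
    {σ : Lbl α} (h : Tr env m σ m') (hm : Unrestricted m) : Unrestricted m' :=
  (h.unrestricted_and_unres henv hm).1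

theorem Tr.netTr (henv : ∀ c, RF (env c)) {m m' : Multiset (Place α κ)}
    {σ : Lbl α} (h : Tr env m σ m') (hm : Unrestricted m) : NetTr env m σ m' :=
  ⟨h, (h.unrestricted_and_unres henv hm).2⟩

@[elab_as_elim]
theorem Tr.sync_induction {motive : ∀ m σ m', Tr env m σ m' → Prop}
    (single : ∀ x σ m' (h : Tr env {x} σ m'), motive {x} σ m' h)
    (sync : ∀ m₁ m₂ m₁' m₂' σ₁ σ₂ σ (h₁ : Tr env m₁ σ₁ m₁') (h₂ : Tr env m₂ σ₂ m₂')
      (hadm : Adm env (m₁ + m₂)) (hsync : Sync σ₁ σ₂ σ),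
      motive m₁ σ₁ m₁' h₁ → motive m₂ σ₂ m₂' h₂ →
      motive (m₁ + m₂) σ (m₁' + m₂') (.scom m₁ m₂ m₁' m₂' σ₁ σ₂ σ h₁ h₂ hadm hsync))
    {m : Multiset (Place α κ)} {σ : Lbl α} {m' : Multiset (Place α κ)} (h : Tr env m σ m') :
    motive m σ m' h := by
  induction h with
  | scom m₁ m₂ m₁' m₂' σ₁ σ₂ σ h₁ h₂ hadm hsync ih₁ ih₂ =>
    exact sync m₁ m₂ m₁' m₂' σ₁ σ₂ σ h₁ h₂ hadm hsync ih₁ ih₂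
  | _ => exact single _ _ _ _

/-- In the linking `c + d`, every transition from the left projection of `c` is matched from its
right projection by a transition leading back into `R`: the transfer condition of
structure-preserving bisimulation in one direction, with the idle part `d` in place of `l ⊖ c`. -/
def Matches (env : κ → FNM α κ) (R : Set (Linking α κ)) (c d : Linking α κ) : Prop :=
  ∀ σ m, NetTr env (pi1 c) σ m →
    ∃ c', pi1 c' = m ∧ NetTr env (pi2 c) σ (pi2 c') ∧ d + c' ∈ R

/-- Structure-preserving simulations, the one-sided version of `IsSPB`. -/
def IsSPSim (env : κ → FNM α κ) (R : Set (Linking α κ)) : Prop :=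
  ∀ c d, c + d ∈ R → Matches env R c d

end Transitions

/-- The linkings of `R` read from right to left, which turns one half of `IsSPB` into the
other. -/
def converse (R : Set (Linking α κ)) : Set (Linking α κ) :=
  {l | l.map Prod.swap ∈ R}

/-- The linkings of `R` between markings of restriction-free processes. Restricting a simulation
to them makes the admissibility condition of the rule (s-com) automatic. -/
def unrestrictedPart (R : Set (Linking α κ)) : Set (Linking α κ) :=
  {l ∈ R | Unrestricted (pi1 l) ∧ Unrestricted (pi2 l)}

theorem map_swap_mem_converse {R : Set (Linking α κ)} {l : Linking α κ} :
    l.map Prod.swap ∈ converse R ↔ l ∈ R := by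
  simp [converse]

theorem converse_add (R S : Set (Linking α κ)) : converse (R + S) = converse R + converse S := by
  ext l
  constructor
  · rintro ⟨k, hk, j, hj, h : k + j = l.map Prod.swap⟩
    refine ⟨k.map Prod.swap, map_swap_mem_converse.2 hk, j.map Prod.swap,
      map_swap_mem_converse.2 hj, ?_⟩
    simp [← Multiset.map_add, h]
  · rintro ⟨k, hk, j, hj, rfl⟩
    exact ⟨_, hk, _, hj, (Multiset.map_add _ _ _).symm⟩

theorem converse_unrestrictedPart (R : Set (Linking α κ)) :
    converse (unrestrictedPart R) = unrestrictedPart (converse R) := by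
  ext l
  simp [converse, unrestrictedPart, pi1_map_swap, pi2_map_swap, and_comm]

section Bisimulation

variable [DecidableEq α] {env : κ → FNM α κ} {R S : Set (Linking α κ)}

theorem isSPB_iff [DecidableEq κ] [Fintype α] :
    IsSPB env R ↔ IsSPSim env R ∧ IsSPSim env (converse R) := by
  constructor
  · intro h
    refine ⟨fun c d hR σ m ht => ?_, fun c d hR σ m ht => ?_⟩
    · obtain ⟨_, c', ht', hm, rfl, hR'⟩ := (h _ hR c (Multiset.le_add_right c d)).1 σ m ht
      exact ⟨c', hm, ht', by rwa [add_tsub_cancel_left] at hR'⟩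
    · have hle : c.map Prod.swap ≤ (c + d).map Prod.swap :=
        Multiset.map_le_map (Multiset.le_add_right c d)
      obtain ⟨_, c', ht', rfl, hm, hR'⟩ := (h _ hR _ hle).2 σ m (by rwa [pi2_map_swap])
      rw [Multiset.map_add, add_tsub_cancel_left] at hR'
      refine ⟨c'.map Prod.swap, by rwa [pi1_map_swap], ?_, ?_⟩
      · rwa [pi1_map_swap, ← pi2_map_swap c'] at ht'
      · simpa [converse] using hR'
  · rintro ⟨hsim, hconv⟩ l hl c hc
    obtain ⟨d, rfl⟩ := Multiset.le_iff_exists_add.1 hc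
    rw [add_tsub_cancel_left]
    refine ⟨fun σ m ht => ?_, fun σ m ht => ?_⟩
    · obtain ⟨c', hm, ht', hR⟩ := hsim c d hl σ m ht
      exact ⟨_, c', ht', hm, rfl, hR⟩
    · obtain ⟨c', hm, ht', hR⟩ := hconv (c.map Prod.swap) (d.map Prod.swap)
        (by rwa [← Multiset.map_add, map_swap_mem_converse]) σ m (by rwa [pi1_map_swap])
      refine ⟨_, c'.map Prod.swap, ?_, rfl, by rwa [pi2_map_swap], ?_⟩
      · rwa [pi1_map_swap, ← pi2_map_swap c]
      · simpa [converse] using hR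

theorem Matches.unrestrictedPart (henv : ∀ c, RF (env c)) {c d : Linking α κ}
    (h : Matches env R c d) (h₁ : Unrestricted (pi1 (c + d))) (h₂ : Unrestricted (pi2 (c + d))) :
    Matches env (unrestrictedPart R) c d := by
  intro σ m ht
  obtain ⟨c', rfl, ht', hR⟩ := h σ m ht
  rw [pi1_add, unrestricted_add] at h₁
  rw [pi2_add, unrestricted_add] at h₂
  refine ⟨c', rfl, ht', hR, ?_, ?_⟩
  · rw [pi1_add]
    exact unrestricted_add.2 ⟨h₁.2, ht.1.unrestricted henv h₁.1⟩
  · rw [pi2_add]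
    exact unrestricted_add.2 ⟨h₂.2, ht'.1.unrestricted henv h₂.1⟩

theorem isSPSim_unrestrictedPart_of_singleton (henv : ∀ c, RF (env c))
    (h : ∀ z d, {z} + d ∈ R → Matches env R {z} d) : IsSPSim env (unrestrictedPart R) := by
  intro c d hR σ m' ht
  obtain ⟨m, hm⟩ : ∃ m, pi1 c = m := ⟨_, rfl⟩
  rw [hm] at ht
  replace ht := ht.1
  induction ht using Tr.sync_induction generalizing c d with
  | single x σ m' ht =>
    obtain ⟨z, rfl, -⟩ := Multiset.map_eq_singleton.1 hm
    have hz : Unrestricted (pi1 {z}) := (unrestricted_add.1 (pi1_add {z} d ▸ hR.2.1)).1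
    rw [← hm] at ht
    exact (h z d hR.1).unrestrictedPart henv hR.2.1 hR.2.2 σ m' (ht.netTr henv hz)
  | sync m₁ m₂ m₁' m₂' σ₁ σ₂ σ _ _ _ hsync ih₁ ih₂ =>
    obtain ⟨c₁, c₂, rfl, h₁, h₂⟩ := exists_add_eq_of_pi1_eq_add hm
    have hc : Unrestricted (pi2 (c₁ + c₂)) := (unrestricted_add.1 (pi2_add (c₁ + c₂) d ▸ hR.2.2)).1
    obtain ⟨c₁', rfl, ht₁, hR₁⟩ := ih₁ c₁ (c₂ + d) (by rwa [← add_assoc]) h₁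
    obtain ⟨c₂', rfl, ht₂, hR₂⟩ := ih₂ c₂ (d + c₁') (by rwa [← add_assoc]) h₂
    have hadm : Adm env (pi2 c₁ + pi2 c₂) := pi2_add c₁ c₂ ▸ hc.adm env
    have ht : Tr env (pi2 (c₁ + c₂)) σ (pi2 (c₁' + c₂')) := by
      rw [pi2_add, pi2_add]
      exact .scom _ _ _ _ _ _ _ ht₁.1 ht₂.1 hadm hsync
    exact ⟨c₁' + c₂', pi1_add _ _, ht.netTr henv hc, by rwa [← add_assoc]⟩

theorem IsSPSim.matches_add (hR : IsSPSim env R) {c k l : Linking α κ} (hk : c + k ∈ R)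
    (hl : l ∈ S) : Matches env (R + S) c (k + l) := by
  intro σ m ht
  obtain ⟨c', hm, ht', hk'⟩ := hR c k hk σ m ht
  exact ⟨c', hm, ht', by simpa [add_right_comm] using Set.add_mem_add hk' hl⟩

theorem IsSPSim.unrestrictedPart_add (henv : ∀ c, RF (env c)) (hR : IsSPSim env R)
    (hS : IsSPSim env S) : IsSPSim env (unrestrictedPart (R + S)) := by
  refine isSPSim_unrestrictedPart_of_singleton henv fun z d hzd => ?_
  obtain ⟨k, hk, l, hl, hkl : k + l = {z} + d⟩ := hzd
  have hz : z ∈ k + l := by simp [hkl]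
  rcases Multiset.mem_add.1 hz with hz | hz
  · obtain ⟨k, rfl⟩ := Multiset.exists_cons_of_mem hz
    rw [← Multiset.singleton_add] at hk hkl
    rw [add_assoc, add_right_inj] at hkl
    exact hkl ▸ hR.matches_add hk hl
  · obtain ⟨l, rfl⟩ := Multiset.exists_cons_of_mem hz
    rw [← Multiset.singleton_add] at hl hkl
    rw [add_left_comm, add_right_inj, add_comm] at hkl
    rw [add_comm R S, ← hkl]
    exact hS.matches_add hl hk

theorem IsSPB.unrestrictedPart_add [DecidableEq κ] [Fintype α] (henv : ∀ c, RF (env c))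
    (hR : IsSPB env R) (hS : IsSPB env S) : IsSPB env (unrestrictedPart (R + S)) := by
  rw [isSPB_iff] at hR hS ⊢
  rw [converse_unrestrictedPart, converse_add]
  exact ⟨hR.1.unrestrictedPart_add henv hS.1, hR.2.unrestrictedPart_add henv hS.2⟩

end Bisimulation

/-- The identity linking on `m`, the answer to every transition in the bisimulation that witnesses
reflexivity. -/
def diag (m : Multiset (Place α κ)) : Linking α κ :=
  m.map fun x => (x, x)

theorem pi1_diag (m : Multiset (Place α κ)) : pi1 (diag m) = m := by
  simp [pi1, diag]

theorem pi2_diag (m : Multiset (Place α κ)) : pi2 (diag m) = m := by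
  simp [pi2, diag]

theorem fst_eq_snd_of_mem_diag {m : Multiset (Place α κ)} {z : Place α κ × Place α κ}
    (hz : z ∈ diag m) : z.1 = z.2 := by
  obtain ⟨x, -, rfl⟩ := Multiset.mem_map.1 hz
  rfl

section Equivalence

variable [DecidableEq α] [DecidableEq κ] [Fintype α] (env : κ → FNM α κ)

theorem isSPB_setOf_fst_eq_snd : IsSPB env {l | ∀ z ∈ l, z.1 = z.2} := by
  intro l hl c hc
  have hpi : pi1 c = pi2 c :=
    Multiset.map_congr rfl fun z hz => hl z (Multiset.mem_of_le hc hz)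
  have hstep (m : Multiset (Place α κ)) : ∀ z ∈ l - c + diag m, z.1 = z.2 := by
    intro z hz
    rcases Multiset.mem_add.1 hz with hz | hz
    · exact hl z (Multiset.mem_of_le tsub_le_self hz)
    · exact fst_eq_snd_of_mem_diag hz
  rw [hpi]
  exact ⟨fun σ m ht => ⟨m, diag m, ht, pi1_diag m, pi2_diag m, hstep m⟩,
    fun σ m ht => ⟨m, diag m, ht, pi1_diag m, pi2_diag m, hstep m⟩⟩

theorem SPEq.refl (p : FNM α κ) : SPEq env p p :=
  ⟨_, isSPB_setOf_fst_eq_snd env, diag (dec (fun _ => false) p),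
    fun _ => fst_eq_snd_of_mem_diag, pi1_diag _, pi2_diag _⟩

end Equivalence

end FNM

open FNM in
theorem speq_congr_par_general {α κ : Type} [DecidableEq α] [DecidableEq κ] [Fintype α]
    {env : κ → FNM α κ} (henv : ∀ c, RF (env c)) {p q r s : FNM α κ}
    (hp : RF p) (hq : RF q) (hr : RF r) (hs : RF s) (hpq : SPEq env p q) (hrs : SPEq env r s) :
    SPEq env (FNM.par p r) (FNM.par q s) := by
  obtain ⟨R, hR, k, hk, hkp, hkq⟩ := hpq
  obtain ⟨S, hS, l, hl, hlr, hls⟩ := hrs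
  have h₁ : pi1 (k + l) = dec (fun _ => false) (FNM.par p r) := by rw [pi1_add, hkp, hlr, dec]
  have h₂ : pi2 (k + l) = dec (fun _ => false) (FNM.par q s) := by rw [pi2_add, hkq, hls, dec]
  refine ⟨_, hR.unrestrictedPart_add henv hS, k + l, ⟨Set.add_mem_add hk hl, ?_, ?_⟩, h₁, h₂⟩
  · exact h₁ ▸ unrestricted_dec ⟨hp, hr⟩
  · exact h₂ ▸ unrestricted_dec ⟨hq, hs⟩

open FNM in
/-- structure-preserving bisimilarity is a congruence for
parallel composition: for restriction-free FNM processes `p, q` with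
`p ~sp q`, `p | r ~sp q | r` for every restriction-free FNM process `r`. -/
theorem speq_congr_par {α κ : Type} [DecidableEq α] [DecidableEq κ]
    [Fintype α] [Finite κ]
    (env : κ → FNM α κ) (henv : ∀ c, Grd (env c) ∧ VarFree (env c))
    (p q : FNM α κ) (hp : RF p) (hq : RF q)
    (hpv : VarFree p) (hqv : VarFree q)
    (h : SPEq env p q) :
    ∀ r : FNM α κ, RF r → VarFree r →
      SPEq env (FNM.par p r) (FNM.par q r) := by
  intro r hr _
  exact speq_congr_par_general (fun c => (henv c).1.rf) hp hq hr hr h (SPEq.refl env r)
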